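/- Let r ≥ 2 and d ≥ 1 be integers. For any n = (n_1, …, n_r) ∈ ℤ_{≥0}^r, there exists a probability measure ρ_n on the finite set Δ_{n_1}^{(d)} × ⋯ × Δ_{n_r}^{(d)} such that the pushforward of ρ_n under each of the r coordinate projections onto Δ_{n_i}^{(d)} is the uniform (equidistributed) probability measure on Δ_{n_i}^{(d)}, and the pushforward of ρ_n under the addition map (α_1, …, α_r) ↦ α_1 + ⋯ + α_r (addition in ℤ^d) is the uniform probability measure on Δ_{n_1 + ⋯ + n_r}^{(d)}. -/

import Mathlib

open scoped ENNReal

/-- `Δ_n^{(d)} = {(a₁, …, a_d) ∈ ℤ_{≥0}^d : a₁ + ⋯ + a_d = n}` is a finite set. -/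
instance fintypeDelta (d n : ℕ) : Fintype {a : Fin d → ℕ // ∑ j, a j = n} :=
  Fintype.subtype (Finset.Nat.antidiagonalTuple d n)
    (fun _ => Finset.Nat.mem_antidiagonalTuple)

/-! Choose `u` uniformly in the standard simplex of `ℝ^d` and, given `u`, draw independent
multinomial vectors `α_i` of size `n_i` with cell probabilities `u`. For every set `s` of indices,
`∑ i ∈ s, α_i` is then, given `u`, multinomial of size `∑ i ∈ s, n i`; averaging over `u` makes
`γ` have probability `|γ|! / ∏ γ_j! * E[u^γ]`, and by the Dirichlet moment formula this depends
only on `|γ|`. The integral over the simplex enters through its moments alone, as a linear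
functional on polynomials that takes the same value on `p` and on `p * ∑ j, X j`. -/

open Finset MvPolynomial
open scoped NNReal Nat

section Uniform

variable {α : Type*}

theorem pmf_eq_uniformOfFinset_of_forall_mem_eq {p : PMF α} {s : Finset α} {c : ℝ≥0∞}
    (hsupp : p.support ⊆ s) (hconst : ∀ a ∈ s, p a = c) :
    p = PMF.uniformOfFinset s (by exact_mod_cast p.support_nonempty.mono hsupp) := by
  have hzero : ∀ a ∉ s, p a = 0 := fun a ha => (p.apply_eq_zero_iff a).2 fun h => ha (hsupp h)
  have hmass : #s * c = 1 := by
    rw [← p.tsum_coe, tsum_eq_sum hzero, sum_congr rfl hconst, sum_const, nsmul_eq_mul]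
  ext a
  by_cases ha : a ∈ s
  · rw [PMF.uniformOfFinset_apply_of_mem _ ha, hconst a ha]
    exact ENNReal.eq_inv_of_mul_eq_one_left (mul_comm c _ ▸ hmass)
  · rw [PMF.uniformOfFinset_apply_of_notMem _ ha, hzero a ha]

theorem pmf_apply_eq_inv_card_of_map_val {P : α → Prop} [Fintype {a // P a}] {s : Finset α}
    {hs : s.Nonempty} (hP : ∀ a, a ∈ s ↔ P a) {p : PMF {a // P a}}
    (hp : p.map Subtype.val = PMF.uniformOfFinset s hs) (a : {a // P a}) :
    p a = (Fintype.card {a // P a} : ℝ≥0∞)⁻¹ := by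
  rw [Fintype.card_of_subtype s hP, ← PMF.uniformOfFinset_apply_of_mem hs ((hP a).2 a.2), ← hp,
    PMF.map_apply, tsum_eq_single a fun b hb => if_neg fun h => hb (Subtype.ext h.symm),
    if_pos rfl]

end Uniform

section Multinomial

variable {ι κ R : Type*} [Fintype κ] [CommSemiring R]

theorem piAntidiag_univ_nonempty [DecidableEq κ] [Nonempty κ] (m : ℕ) :
    (piAntidiag (univ : Finset κ) m).Nonempty :=
  ⟨Pi.single (Classical.arbitrary κ) m, by simp⟩

/-- The term of exponent `a` in the multinomial expansion of a power of `∑ j, f j`. For a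
probability vector `f` this is the multinomial distribution with cell probabilities `f`. -/
def multinomialTerm (f : κ → R) (a : κ → ℕ) : R :=
  Nat.multinomial univ a * ∏ j, f j ^ a j

theorem sum_multinomialTerm [DecidableEq κ] (f : κ → R) (m : ℕ) :
    ∑ a : piAntidiag univ m, multinomialTerm f a.1 = (∑ j, f j) ^ m := by
  rw [sum_pow_eq_sum_piAntidiag, sum_coe_sort _ (multinomialTerm f)]
  rfl

theorem map_multinomialTerm {S : Type*} [CommSemiring S] (g : R →+* S) (f : κ → R) (a : κ → ℕ) :
    multinomialTerm (fun j => g (f j)) a = g (multinomialTerm f a) := by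
  simp [multinomialTerm]

theorem multinomialTerm_C_mul_X (f : κ → R) (a : κ → ℕ) :
    multinomialTerm (fun j => C (f j) * X j) a =
      monomial (Finsupp.equivFunOnFinite.symm a) (multinomialTerm f a) := by
  rw [monomial_eq, Finsupp.prod_fintype _ _ fun _ => pow_zero _, multinomialTerm, multinomialTerm]
  simp [mul_pow, prod_mul_distrib, mul_assoc]

variable [DecidableEq κ]

theorem coeff_sum_C_mul_X_pow (f : κ → R) {m : ℕ} {a : κ → ℕ} (ha : a ∈ piAntidiag univ m) :
    coeff (Finsupp.equivFunOnFinite.symm a) ((∑ j, C (f j) * X j) ^ m) = multinomialTerm f a := by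
  rw [← sum_multinomialTerm, sum_coe_sort _ (multinomialTerm fun j => C (f j) * X j), coeff_sum]
  simp only [multinomialTerm_C_mul_X, coeff_monomial, EmbeddingLike.apply_eq_iff_eq, sum_ite_eq',
    if_pos ha]

variable [Fintype ι] [DecidableEq ι]

theorem sum_prod_multinomialTerm (f : ι → κ → R) (n : ι → ℕ) :
    ∑ x : ∀ i, piAntidiag univ (n i), ∏ i, multinomialTerm (f i) (x i).1 =
      ∏ i, (∑ j, f i j) ^ n i := by
  rw [← Fintype.prod_sum fun i (a : piAntidiag univ (n i)) => multinomialTerm (f i) a.1]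
  simp only [sum_multinomialTerm]

-- The variables `X j` mark the summands with index in `s`, and only those.
theorem sum_monomial_prod_multinomialTerm (f : κ → R) (n : ι → ℕ) (s : Finset ι) :
    ∑ x : ∀ i, piAntidiag (univ : Finset κ) (n i),
        monomial (Finsupp.equivFunOnFinite.symm (∑ i ∈ s, (x i).1))
          (∏ i, multinomialTerm f (x i).1) =
      C ((∑ j, f j) ^ ∑ i ∈ sᶜ, n i) * (∑ j, C (f j) * X j) ^ ∑ i ∈ s, n i := by
  let marked (i : ι) (j : κ) : MvPolynomial κ R := if i ∈ s then C (f j) * X j else C (f j)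
  calc
    _ = ∑ x : ∀ i, piAntidiag (univ : Finset κ) (n i), ∏ i, multinomialTerm (marked i) (x i).1 := by
      refine sum_congr rfl fun x _ => ?_
      have hin : ∀ i ∈ s, multinomialTerm (marked i) (x i).1 =
          monomial (Finsupp.equivFunOnFinite.symm (x i).1) (multinomialTerm f (x i).1) := by
        intro i hi
        simp only [marked, if_pos hi, multinomialTerm_C_mul_X]
      have hout : ∀ i ∈ sᶜ, multinomialTerm (marked i) (x i).1 = C (multinomialTerm f (x i).1) := by
        intro i hi
        simp only [marked, if_neg (mem_compl.1 hi), map_multinomialTerm]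
      have hexp : Finsupp.equivFunOnFinite.symm (∑ i ∈ s, (x i).1) =
          ∑ i ∈ s, Finsupp.equivFunOnFinite.symm (x i).1 := by
        ext
        simp
      rw [← prod_compl_mul_prod s, ← prod_compl_mul_prod s, prod_congr rfl hin, prod_congr rfl hout,
        ← monomial_sum_prod, ← map_prod, C_mul_monomial, hexp]
    _ = ∏ i, (∑ j, marked i j) ^ n i := sum_prod_multinomialTerm marked n
    _ = _ := by
      have hin : ∀ i ∈ s, (∑ j, marked i j) ^ n i = (∑ j, C (f j) * X j) ^ n i := by
        intro i hi
        simp only [marked, if_pos hi]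
      have hout : ∀ i ∈ sᶜ, (∑ j, marked i j) ^ n i = C (∑ j, f j) ^ n i := by
        intro i hi
        simp only [marked, if_neg (mem_compl.1 hi), map_sum]
      rw [← prod_compl_mul_prod s, prod_congr rfl hin, prod_congr rfl hout, prod_pow_eq_pow_sum,
        prod_pow_eq_pow_sum, map_pow]

theorem sum_prod_multinomialTerm_of_sum_eq (f : κ → R) (n : ι → ℕ) (s : Finset ι) {γ : κ → ℕ}
    (hγ : γ ∈ piAntidiag univ (∑ i ∈ s, n i)) :
    ∑ x : ∀ i, piAntidiag (univ : Finset κ) (n i) with ∑ i ∈ s, (x i).1 = γ,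
        ∏ i, multinomialTerm f (x i).1 =
      (∑ j, f j) ^ (∑ i ∈ sᶜ, n i) * multinomialTerm f γ := by
  have hcoeff := congrArg (coeff (Finsupp.equivFunOnFinite.symm γ))
    (sum_monomial_prod_multinomialTerm f n s)
  rw [coeff_C_mul, coeff_sum_C_mul_X_pow f hγ, coeff_sum] at hcoeff
  simpa only [sum_filter, coeff_monomial, EmbeddingLike.apply_eq_iff_eq] using hcoeff

end Multinomial

section Dirichlet

variable {κ : Type*} [Fintype κ]

variable (κ) in
/-- Expectation of a polynomial in a uniformly distributed point of the standard simplex of `ℝ^κ`,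
specified by the Dirichlet moments `∏ j, (a j)! / (d (d + 1) ⋯ (d + |a| - 1))`, `d = |κ|`. -/
noncomputable def dirichletExpectation : MvPolynomial κ ℝ≥0 →ₗ[ℝ≥0] ℝ≥0 :=
  (basisMonomials κ ℝ≥0).constr ℝ≥0 fun a =>
    (∏ j, ((a j)! : ℝ≥0)) / (Fintype.card κ).ascFactorial (∑ j, a j)

theorem dirichletExpectation_monomial (a : κ →₀ ℕ) (c : ℝ≥0) :
    dirichletExpectation κ (monomial a c) =
      c * ((∏ j, ((a j)! : ℝ≥0)) / (Fintype.card κ).ascFactorial (∑ j, a j)) := by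
  rw [← mul_one c, ← smul_eq_mul, ← smul_monomial, map_smul, smul_eq_mul, smul_eq_mul, mul_one]
  exact congrArg _ ((basisMonomials κ ℝ≥0).constr_basis ℝ≥0 _ a)

theorem dirichletExpectation_one : dirichletExpectation κ 1 = 1 := by
  simpa using dirichletExpectation_monomial (0 : κ →₀ ℕ) 1

theorem dirichletExpectation_multinomialTerm_X (a : κ → ℕ) :
    dirichletExpectation κ (multinomialTerm X a) =
      (∑ j, a j)! / (Fintype.card κ).ascFactorial (∑ j, a j) := by
  have hX : multinomialTerm X a = monomial (Finsupp.equivFunOnFinite.symm a)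
      (multinomialTerm (fun _ : κ => (1 : ℝ≥0)) a) := by
    simpa only [map_one, one_mul] using multinomialTerm_C_mul_X (fun _ : κ => (1 : ℝ≥0)) a
  have hone : multinomialTerm (fun _ : κ => (1 : ℝ≥0)) a = Nat.multinomial univ a := by
    simp [multinomialTerm]
  have hspec : (Nat.multinomial univ a : ℝ≥0) * ∏ j, ((a j)! : ℝ≥0) = (∑ j, a j)! := by
    rw [mul_comm, ← Nat.multinomial_spec univ a, Nat.cast_mul, Nat.cast_prod]
  rw [hX, hone, dirichletExpectation_monomial, ← hspec, mul_div_assoc]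
  simp only [Finsupp.coe_equivFunOnFinite_symm]

theorem prod_factorial_add_single (a : κ →₀ ℕ) (j : κ) :
    ∏ k, ((a + Finsupp.single j 1 : κ →₀ ℕ) k)! = (a j + 1) * ∏ k, (a k)! := by
  classical
  rw [Fintype.prod_eq_mul_prod_compl j, Fintype.prod_eq_mul_prod_compl j, ← mul_assoc]
  congr 1
  · simp [Nat.factorial_succ]
  · refine prod_congr rfl fun k hk => ?_
    have hkj : k ≠ j := by simpa using hk
    simp [hkj]

-- The Pólya urn rule: after drawing `a`, the next colour is `j` with odds `a j + 1`.
theorem dirichletExpectation_monomial_mul_X (a : κ →₀ ℕ) (c : ℝ≥0) (j : κ) :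
    dirichletExpectation κ (monomial a c * X j) =
      (a j + 1) / (Fintype.card κ + ∑ k, (a k : ℝ≥0)) *
        dirichletExpectation κ (monomial a c) := by
  have hdeg : ∑ k, (a + Finsupp.single j 1 : κ →₀ ℕ) k = ∑ k, a k + 1 := by
    simp [sum_add_distrib]
  rw [X, monomial_mul, mul_one, dirichletExpectation_monomial, dirichletExpectation_monomial, hdeg,
    Nat.ascFactorial_succ, ← Nat.cast_prod, prod_factorial_add_single]
  push_cast
  rw [mul_div_mul_comm, mul_left_comm]

theorem dirichletExpectation_mul_sum_X [Nonempty κ] (p : MvPolynomial κ ℝ≥0) :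
    dirichletExpectation κ (p * ∑ j, X j) = dirichletExpectation κ p := by
  induction p using MvPolynomial.induction_on' with
  | add p q hp hq => rw [add_mul, map_add, map_add, hp, hq]
  | monomial a c =>
    have hpos : (Fintype.card κ + ∑ j, (a j : ℝ≥0)) ≠ 0 := by positivity
    have hsum : ∑ j, ((a j : ℝ≥0) + 1) = Fintype.card κ + ∑ j, (a j : ℝ≥0) := by
      simp [sum_add_distrib, add_comm]
    rw [mul_sum, map_sum]
    simp only [dirichletExpectation_monomial_mul_X]
    rw [← sum_mul, ← sum_div, hsum, div_self hpos, one_mul]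

theorem dirichletExpectation_mul_sum_X_pow [Nonempty κ] (p : MvPolynomial κ ℝ≥0) (m : ℕ) :
    dirichletExpectation κ (p * (∑ j, X j) ^ m) = dirichletExpectation κ p := by
  induction m with
  | zero => rw [pow_zero, mul_one]
  | succ m ih => rw [pow_succ, ← mul_assoc, dirichletExpectation_mul_sum_X, ih]

end Dirichlet

section Coupling

variable {ι κ : Type*} [Fintype ι] [DecidableEq ι] [Fintype κ] [DecidableEq κ] [Nonempty κ]

theorem sum_dirichletExpectation_prod_multinomialTerm (n : ι → ℕ) :
    ∑ x : ∀ i, piAntidiag (univ : Finset κ) (n i),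
      dirichletExpectation κ (∏ i, multinomialTerm X (x i).1) = 1 := by
  rw [← map_sum, sum_prod_multinomialTerm, prod_pow_eq_pow_sum, ← one_mul (_ ^ _),
    dirichletExpectation_mul_sum_X_pow, dirichletExpectation_one]

variable (κ) in
/-- The law of multinomial vectors of sizes `n i`, conditionally independent with common random cell
probabilities uniformly distributed in the simplex. -/
noncomputable def dirichletMultinomial (n : ι → ℕ) :
    PMF (∀ i, piAntidiag (univ : Finset κ) (n i)) :=
  PMF.ofFintype (fun x => dirichletExpectation κ (∏ i, multinomialTerm X (x i).1)) <|
    mod_cast sum_dirichletExpectation_prod_multinomialTerm n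

theorem map_sum_dirichletMultinomial_apply (n : ι → ℕ) (s : Finset ι) {γ : κ → ℕ}
    (hγ : γ ∈ piAntidiag univ (∑ i ∈ s, n i)) :
    (dirichletMultinomial κ n).map (fun x => ∑ i ∈ s, (x i).1) γ =
      (((∑ i ∈ s, n i)! / (Fintype.card κ).ascFactorial (∑ i ∈ s, n i) : ℝ≥0) : ℝ≥0∞) := by
  have hsum : ∑ j, γ j = ∑ i ∈ s, n i := by simpa using hγ
  calc
    _ = ((∑ x : ∀ i, piAntidiag (univ : Finset κ) (n i) with ∑ i ∈ s, (x i).1 = γ,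
          dirichletExpectation κ (∏ i, multinomialTerm X (x i).1) : ℝ≥0) : ℝ≥0∞) := by
      rw [PMF.map_apply, tsum_fintype, sum_filter]
      push_cast
      refine sum_congr rfl fun x _ => ?_
      simp [dirichletMultinomial, eq_comm, apply_ite ((↑) : ℝ≥0 → ℝ≥0∞)]
    _ = _ := by
      rw [← map_sum, sum_prod_multinomialTerm_of_sum_eq X n s hγ,
        mul_comm, dirichletExpectation_mul_sum_X_pow, dirichletExpectation_multinomialTerm_X, hsum]

theorem map_sum_dirichletMultinomial (n : ι → ℕ) (s : Finset ι) :
    (dirichletMultinomial κ n).map (fun x => ∑ i ∈ s, (x i).1) =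
      PMF.uniformOfFinset (piAntidiag univ (∑ i ∈ s, n i)) (piAntidiag_univ_nonempty _) := by
  refine pmf_eq_uniformOfFinset_of_forall_mem_eq (fun γ hγ => ?_)
    fun γ hγ => map_sum_dirichletMultinomial_apply n s hγ
  obtain ⟨x, -, rfl⟩ := (PMF.mem_support_map_iff _ _ _).1 hγ
  have hx (i : ι) : ∑ j, (x i).1 j = n i := (mem_piAntidiag.1 (x i).2).1
  simp [sum_comm (s := univ), hx]

end Coupling

theorem stmt_13_general {ι κ : Type*} [Finite ι] [Fintype κ] [DecidableEq κ] [Nonempty κ]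
    (n : ι → ℕ) :
    ∃ ρ : PMF (∀ i, piAntidiag (univ : Finset κ) (n i)), ∀ s : Finset ι,
      ρ.map (fun x => ∑ i ∈ s, (x i).1) =
        PMF.uniformOfFinset (piAntidiag univ (∑ i ∈ s, n i)) (piAntidiag_univ_nonempty _) := by
  classical
  have := Fintype.ofFinite ι
  exact ⟨dirichletMultinomial κ n, map_sum_dirichletMultinomial n⟩

theorem stmt_13 (r d : ℕ) (hr : 2 ≤ r) (hd : 1 ≤ d) (n : Fin r → ℕ) :
    ∃ ρ : PMF (∀ i : Fin r, {a : Fin d → ℕ // ∑ j, a j = n i}),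
      -- the pushforward under each coordinate projection is uniform
      (∀ i : Fin r, ∀ α : {a : Fin d → ℕ // ∑ j, a j = n i},
        (ρ.map fun x => x i) α
          = (Fintype.card {a : Fin d → ℕ // ∑ j, a j = n i} : ℝ≥0∞)⁻¹) ∧
      -- the pushforward under the addition map is uniform
      (∀ γ : {a : Fin d → ℕ // ∑ j, a j = ∑ i, n i},
        (ρ.map fun x =>
          (⟨fun j => ∑ i, (x i).1 j, by
              rw [Finset.sum_comm]
              exact Finset.sum_congr rfl fun i _ => (x i).2⟩ :
            {a : Fin d → ℕ // ∑ j, a j = ∑ i, n i})) γ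
          = (Fintype.card {a : Fin d → ℕ // ∑ j, a j = ∑ i, n i} : ℝ≥0∞)⁻¹) := by
  have : Nonempty (Fin d) := Fin.pos_iff_nonempty.1 hd
  obtain ⟨ρ, hρ⟩ := stmt_13_general (κ := Fin d) n
  have hmem (m : ℕ) (a : Fin d → ℕ) : a ∈ piAntidiag univ m ↔ ∑ j, a j = m := by simp
  refine ⟨ρ.map fun x i => ⟨x i, (hmem _ _).1 (x i).2⟩,
    fun i => pmf_apply_eq_inv_card_of_map_val (hmem _) (hs := piAntidiag_univ_nonempty _) ?_,
    fun γ => pmf_apply_eq_inv_card_of_map_val (hmem _) (hs := piAntidiag_univ_nonempty _) ?_ γ⟩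
  · simpa [PMF.map_comp, Function.comp_def] using hρ {i}
  · simp only [PMF.map_comp, Function.comp_def, ← hρ univ]
    congr! with x
    simp
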